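/- arXiv:1710.08143 — 3 statements merged into one kernel-verified Lean document; each statement's English description precedes it below -/
import Mathlib

section
/- Let G be a finite connected unicyclic simple graph (i.e., a connected graph containing exactly one cycle, equivalently a connected graph whose number of edges equals its number of vertices). Then the distinguishing index of G equals its distinguishing number, i.e., D'(G) = D(G). -/
open SimpleGraph

/-- The distinguishing number of a simple graph `G`: the least `d` such that there is a
vertex labeling with `d` labels preserved only by the trivial automorphism. -/
noncomputable def distinguishingNumber {V : Type*} (G : SimpleGraph V) : ℕ :=
  sInf {d : ℕ | ∃ φ : V → Fin d,
    ∀ f : G ≃g G, (∀ x : V, φ (f x) = φ x) → ∀ x : V, f x = x}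

/-- The distinguishing index of a simple graph `G`: the least `d` such that there is an
edge labeling with `d` labels preserved only by the trivial automorphism. -/
noncomputable def distinguishingIndex {V : Type*} (G : SimpleGraph V) : ℕ :=
  sInf {d : ℕ | ∃ ψ : G.edgeSet → Fin d,
    ∀ f : G ≃g G, (∀ e : G.edgeSet, ψ (f.mapEdgeSet e) = ψ e) → ∀ x : V, f x = x}

lemma dn_comb (n : ℕ) (hn : 3 ≤ n) (d : ℕ) (R S : Set (ZMod n)) (t : ZMod n)
    (a : ZMod n → Fin d) (hR : ∀ r ∈ R, (∀ x, a (x + r) = a x) → r = 0)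
    (hS : ∀ s ∈ S, ¬ ∀ x, a (s - x) = a x) :
    ∃ b : ZMod n → Fin d, (∀ r ∈ R, (∀ x, b (x + r) = b x) → r = 0) ∧
      ∀ s ∈ S, ¬ ∀ x, b (s + t - x) = b x := by
  by_cases hu : ∀ s, s ∈ S
  · exact ⟨a, hR, fun s _ => hS _ (hu _)⟩
  push Not at hu
  obtain ⟨c, hc⟩ := hu
  by_cases hd : Subsingleton (Fin d)
  · exact ⟨a, hR, fun s hs => (hS s hs (fun x => Subsingleton.elim _ _)).elim⟩
  rw [not_subsingleton_iff_nontrivial] at hd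
  obtain ⟨p, q, hpq⟩ := exists_pair_ne (Fin d)
  rcases Nat.even_or_odd' n with ⟨k, hk | hk⟩
  · by_cases h4 : n = 4
    · clear hk
      subst h4
      have key : ∀ c' : ZMod 4, ∃ g : ZMod 4 → Bool, (∀ r, (∀ x, g (x + r) = g x) → r = 0) ∧
          ∀ s, (∀ x, g (s - x) = g x) → s = c' := by
        decide
      obtain ⟨g, hg1, hg2⟩ := key (c + t)
      have hinj : ∀ u v : Bool, (if u then p else q) = (if v then p else q) → u = v := by
        intro u v; cases u <;> cases v <;> simp [hpq, hpq.symm]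
      refine ⟨fun x => if g x then p else q, fun r _ h => hg1 r fun x => hinj _ _ (h x), ?_⟩
      intro s hs h
      have := hg2 (s + t) fun x => hinj _ _ (h x)
      have : s = c := by simpa using this
      exact hc (this ▸ hs)
    · have h6 : 6 ≤ n := by omega
      have nz : ∀ m : ℕ, 0 < m → m < 6 → (m : ZMod n) ≠ 0 := by
        intro m h0 hm h
        rw [ZMod.natCast_eq_zero_iff] at h
        have := Nat.le_of_dvd h0 h
        omega
      have n1 := nz 1 (by norm_num) (by norm_num)
      have n2 := nz 2 (by norm_num) (by norm_num)
      have n3 := nz 3 (by norm_num) (by norm_num)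
      have n4 := nz 4 (by norm_num) (by norm_num)
      have n5 := nz 5 (by norm_num) (by norm_num)
      push_cast at n1 n2 n3 n4 n5
      let A : ZMod n → Prop := fun x => x = 0 ∨ x = 1 ∨ x = 3
      classical
      have hinj : ∀ u v : ZMod n, (if A u then p else q) = (if A v then p else q) → A v → A u := by
        intro u v h hv
        by_contra hu
        simp [hu, hv, hpq.symm] at h
      refine ⟨fun x => if A x then p else q, ?_, ?_⟩
      · intro r _ h
        have a0 := hinj _ _ (h 0) (by simp [A])
        have a1 := hinj _ _ (h 1) (by simp [A])
        have a3 := hinj _ _ (h 3) (by simp [A])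
        simp only [A] at a0 a1 a3
        grind
      · intro s _ h
        have a0 := hinj _ _ (h 0) (by simp [A])
        have a1 := hinj _ _ (h 1) (by simp [A])
        have a3 := hinj _ _ (h 3) (by simp [A])
        simp only [A] at a0 a1 a3
        generalize s + t = s at *
        grind
  · have h2 : ∃ h : ZMod n, h + h = t := by
      refine ⟨t * (k + 1), ?_⟩
      have : ((2 * k + 1 : ℕ) : ZMod n) = 0 := by rw [← hk]; simp
      push_cast at this
      linear_combination t * this
    obtain ⟨h, rfl⟩ := h2
    refine ⟨fun x => a (x - h), fun r hr hx => hR r hr fun x => ?_, fun s hs hx => hS s hs fun x => ?_⟩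
    · have := hx (x + h)
      convert this using 2 <;> ring
    · have := hx (x + h)
      convert this using 2 <;> ring

lemma dn_transfer {Γ X Y : Type*} (n : ℕ) (hn : 3 ≤ n) (d : ℕ)
    (aX : Γ → X → X) (aY : Γ → Y → Y) (T : Γ → Prop) (c : ZMod n → X) (e : ZMod n → Y)
    (κ : X ≃ Y) (hc : ∀ i, κ (c i) = e i) (hinj : Function.Injective c)
    (hW : ∀ f w, w ∉ Set.range c → aX f w ∉ Set.range c ∧ κ (aX f w) = aY f (κ w))
    (t : ZMod n)
    (hact : ∀ f, (∃ r, (∀ x, aX f (c x) = c (x + r)) ∧ (∀ x, aY f (e x) = e (x + r)) ∧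
        (T f → r = 0)) ∨
      (∃ s, (∀ x, aX f (c x) = c (s - x)) ∧ (∀ x, aY f (e x) = e (s + t - x)) ∧ ¬ T f))
    (h : ∃ φ : X → Fin d, ∀ f, (∀ x, φ (aX f x) = φ x) → T f) :
    ∃ ψ : Y → Fin d, ∀ f, (∀ y, ψ (aY f y) = ψ y) → T f := by
  classical
  obtain ⟨φ, hφ⟩ := h
  have ext : ∀ f, (∀ w, w ∉ Set.range c → φ (aX f w) = φ w) →
      (∀ i, φ (aX f (c i)) = φ (c i)) → T f := by
    intro f h1 h2
    apply hφ
    intro x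
    by_cases hx : x ∈ Set.range c
    · obtain ⟨i, rfl⟩ := hx; exact h2 i
    · exact h1 x hx
  obtain ⟨b, hb1, hb2⟩ := dn_comb n hn d
    {r | ∃ f, (∀ w, w ∉ Set.range c → φ (aX f w) = φ w) ∧ (∀ x, aX f (c x) = c (x + r)) ∧
      (T f → r = 0)}
    {s | ∃ f, (∀ w, w ∉ Set.range c → φ (aX f w) = φ w) ∧ (∀ x, aX f (c x) = c (s - x)) ∧ ¬ T f}
    t (fun i => φ (c i))
    (by
      rintro r ⟨f, h1, h2, h3⟩ h4
      exact h3 (ext f h1 fun i => by rw [h2]; exact h4 i))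
    (by
      rintro r ⟨f, h1, h2, h3⟩ h4
      exact h3 (ext f h1 fun i => by rw [h2]; exact h4 i))
  let φ' : X → Fin d := fun x => if h : ∃ i, c i = x then b h.choose else φ x
  have p1 : ∀ i, φ' (c i) = b i := by
    intro i
    have h : ∃ j, c j = c i := ⟨i, rfl⟩
    simp only [φ', dif_pos h]
    rw [hinj h.choose_spec]
  have p2 : ∀ w, w ∉ Set.range c → φ' w = φ w := by
    intro w hw
    exact dif_neg hw
  refine ⟨fun y => φ' (κ.symm y), fun f hf => ?_⟩
  have q1 : ∀ w, w ∉ Set.range c → φ (aX f w) = φ w := by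
    intro w hw
    have := hf (κ w)
    rw [← (hW f w hw).2] at this
    simpa [p2 _ hw, p2 _ (hW f w hw).1] using this
  have es : ∀ i, κ.symm (e i) = c i := fun i => by rw [← hc]; simp
  rcases hact f with ⟨r, h1, h2, h3⟩ | ⟨s, h1, h2, h3⟩
  · have : r = 0 := hb1 r ⟨f, q1, h1, h3⟩ fun x => by
      have := hf (e x)
      simpa only [h2, es, p1] using this
    subst this
    exact ext f q1 fun i => by rw [h1]; simp
  · exact (hb2 s ⟨f, q1, h1, h3⟩ fun x => by
      have := hf (e x)
      simpa only [h2, es, p1] using this).elim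


lemma dn_cycle {V : Type*} [Fintype V] (G : SimpleGraph V)
    (hconn : G.Connected) (hedge : G.edgeSet.ncard = Fintype.card V) :
    ∃ n, 3 ≤ n ∧ ∃ c : ZMod n → V, Function.Injective c ∧ ∀ i, G.Adj (c i) (c (i + 1)) := by
  classical
  have hna : ¬ G.IsAcyclic := by
    intro ha
    have := (SimpleGraph.IsTree.mk hconn ha).card_edgeFinset
    rw [← SimpleGraph.coe_edgeFinset, Set.ncard_coe_finset] at hedge
    omega
  simp only [SimpleGraph.IsAcyclic, not_forall, not_not] at hna
  obtain ⟨v, p, hp⟩ := hna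
  have h3 := hp.three_le_length
  refine ⟨p.length, h3, fun i => p.getVert i.val, ?_, ?_⟩
  · have : NeZero p.length := ⟨by omega⟩
    intro i j hij
    have hi := ZMod.val_lt i
    have hj := ZMod.val_lt j
    apply ZMod.val_injective
    exact hp.getVert_injOn' (by simp only [Set.mem_ofPred_eq]; omega)
      (by simp only [Set.mem_ofPred_eq]; omega) hij
  · have : NeZero p.length := ⟨by omega⟩
    have : Fact (1 < p.length) := ⟨by omega⟩
    intro i
    have hi := ZMod.val_lt i
    have hadj := p.adj_getVert_succ hi
    have : p.getVert (i + 1).val = p.getVert (i.val + 1) := by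
      rw [ZMod.val_add, ZMod.val_one]
      by_cases h : i.val + 1 = p.length
      · rw [h]; simp
      · rw [Nat.mod_eq_of_lt (by omega)]
    simpa only [this] using hadj

lemma dn_delta {V ι : Type*} [Nonempty ι] (G : SimpleGraph V) (hconn : G.Connected) (c : ι → V) :
    ∃ δ : V → ℕ, (∀ v, v ∉ Set.range c → ∃ w, G.Adj v w ∧ δ w < δ v) ∧
      ∀ f : G ≃g G, (∀ i, f (c i) ∈ Set.range c) → ∀ v, δ (f v) ≤ δ v := by
  let S : V → Set ℕ := fun v => {k | ∃ i, ∃ p : G.Walk v (c i), p.length = k}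
  have hS : ∀ v, (S v).Nonempty := by
    intro v
    obtain ⟨i⟩ := ‹Nonempty ι›
    obtain ⟨p⟩ := hconn v (c i)
    exact ⟨_, i, p, rfl⟩
  refine ⟨fun v => sInf (S v), ?_, ?_⟩
  · intro v hv
    obtain ⟨i, p, hp⟩ := Nat.sInf_mem (hS v)
    change ∃ w, G.Adj v w ∧ sInf (S w) < sInf (S v)
    rw [← hp]
    clear hp
    obtain ⟨y, hy⟩ : ∃ y, c i = y := ⟨_, rfl⟩
    generalize hq : p.copy rfl hy = p'
    have hl : p.length = p'.length := by rw [← hq]; simp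
    rw [hl]
    clear hl hq
    cases p' with
    | nil => exact (hv ⟨i, hy⟩).elim
    | cons h q =>
      refine ⟨_, h, ?_⟩
      have : sInf (S _) ≤ q.length := Nat.sInf_le ⟨i, q.copy rfl hy.symm, by simp⟩
      simp only [SimpleGraph.Walk.length_cons]
      omega
  · intro f hf v
    obtain ⟨i, p, hp⟩ := Nat.sInf_mem (hS v)
    change sInf (S (f v)) ≤ sInf (S v)
    rw [← hp]
    obtain ⟨j, hj⟩ := hf i
    apply Nat.sInf_le
    exact ⟨j, (p.map f.toHom).copy rfl hj.symm, by simp⟩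

lemma dn_rot (n : ℕ) (hn : 3 ≤ n) (g : ZMod n → ZMod n) (hg : Function.Injective g)
    (h : ∀ i, g (i + 1) = g i + 1 ∨ g i = g (i + 1) + 1) :
    (∃ r, ∀ x, g x = x + r) ∨ (∃ s, ∀ x, g x = s - x) := by
  have : NeZero n := ⟨by omega⟩
  have h2 : (2 : ZMod n) ≠ 0 := by
    intro h
    have h : ((2 : ℕ) : ZMod n) = 0 := by exact_mod_cast h
    rw [ZMod.natCast_eq_zero_iff] at h
    have := Nat.le_of_dvd (by norm_num) h
    omega
  have hne : ∀ i, g (i + 1 + 1) ≠ g i := by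
    intro i hi
    have := hg hi
    apply h2
    linear_combination this
  rcases h 0 with h0 | h0
  · left
    refine ⟨g 0, ?_⟩
    have key : ∀ k : ℕ, g k = k + g 0 ∧ g (k + 1) = g k + 1 := by
      intro k
      induction k with
      | zero => simpa using h0
      | succ k ih =>
        push_cast
        refine ⟨by rw [ih.2, ih.1]; ring, ?_⟩
        rcases h (k + 1) with h1 | h1
        · exact h1
        · exact (hne k (by linear_combination ih.2 - h1)).elim
    intro x
    have := (key x.val).1
    simpa using this
  · right
    refine ⟨g 0, ?_⟩
    have key : ∀ k : ℕ, g k = g 0 - k ∧ g k = g (k + 1) + 1 := by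
      intro k
      induction k with
      | zero => simpa using h0
      | succ k ih =>
        push_cast
        refine ⟨by linear_combination ih.1 - ih.2, ?_⟩
        rcases h (k + 1) with h1 | h1
        · exact (hne k (by linear_combination h1 - ih.2)).elim
        · exact h1
    intro x
    have := (key x.val).1
    simpa using this

lemma dn_main {V : Type*} [Fintype V] (G : SimpleGraph V)
    (hconn : G.Connected) (hedge : G.edgeSet.ncard = Fintype.card V) (d : ℕ) :
    (∃ ψ : G.edgeSet → Fin d,
      ∀ f : G ≃g G, (∀ e : G.edgeSet, ψ (f.mapEdgeSet e) = ψ e) → ∀ x : V, f x = x) ↔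
    (∃ φ : V → Fin d, ∀ f : G ≃g G, (∀ x : V, φ (f x) = φ x) → ∀ x : V, f x = x) := by
  classical
  obtain ⟨n, hn, c, hc, hadj⟩ := dn_cycle G hconn hedge
  have : NeZero n := ⟨by omega⟩
  have h2 : (2 : ZMod n) ≠ 0 := by
    intro h
    have h : ((2 : ℕ) : ZMod n) = 0 := by exact_mod_cast h
    rw [ZMod.natCast_eq_zero_iff] at h
    have := Nat.le_of_dvd (by norm_num) h
    omega
  obtain ⟨δ, hδ1, hδ2⟩ := dn_delta G hconn c
  choose! par hpar1 hpar2 using hδ1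
  let e : ZMod n → G.edgeSet := fun i => ⟨s(c i, c (i + 1)), hadj i⟩
  let k0 : V → G.edgeSet := fun v =>
    if h : v ∈ Set.range c then e h.choose else ⟨s(v, par v), hpar1 v h⟩
  have k1 : ∀ i, k0 (c i) = e i := by
    intro i
    have h : c i ∈ Set.range c := ⟨i, rfl⟩
    have h' : k0 (c i) = e h.choose := dif_pos h
    rw [h', hc h.choose_spec]
  have k2 : ∀ v (h : v ∉ Set.range c), k0 v = ⟨s(v, par v), hpar1 v h⟩ := fun v h => dif_neg h
  have einj : Function.Injective e := by
    intro i j hij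
    have hij := congrArg Subtype.val hij
    simp only [e, Sym2.eq_iff] at hij
    rcases hij with ⟨h, _⟩ | ⟨h, h'⟩
    · exact hc h
    · have a := hc h
      have b := hc h'
      exact (h2 (by linear_combination b - a)).elim
  have kinj : Function.Injective k0 := by
    intro v w hvw
    by_cases hv : v ∈ Set.range c <;> by_cases hw : w ∈ Set.range c
    · obtain ⟨i, rfl⟩ := hv
      obtain ⟨j, rfl⟩ := hw
      rw [k1, k1] at hvw
      rw [einj hvw]
    · obtain ⟨i, rfl⟩ := hv
      rw [k1, k2 w hw] at hvw
      have := congrArg Subtype.val hvw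
      simp only [e, Sym2.eq_iff] at this
      rcases this with ⟨h, _⟩ | ⟨_, h⟩
      · exact h
      · exact (hw ⟨_, h⟩).elim
    · obtain ⟨i, rfl⟩ := hw
      rw [k1, k2 v hv] at hvw
      have := congrArg Subtype.val hvw
      simp only [e, Sym2.eq_iff] at this
      rcases this with ⟨h, _⟩ | ⟨h, _⟩
      · exact h
      · exact (hv ⟨_, h.symm⟩).elim
    · rw [k2 v hv, k2 w hw] at hvw
      have := congrArg Subtype.val hvw
      simp only [Sym2.eq_iff] at this
      rcases this with ⟨h, _⟩ | ⟨h, h'⟩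
      · exact h
      · have a := hpar2 v hv
        have b := hpar2 w hw
        rw [h'] at a
        rw [← h] at b
        omega
  have kbij : Function.Bijective k0 := by
    apply Function.Injective.bijective_of_nat_card_le kinj
    rw [Nat.card_eq_fintype_card (α := V), ← hedge]
    exact le_of_eq (Nat.card_coe_set_eq _)
  -- classification of the edges
  have hcls : ∀ a b, G.Adj a b → (∃ i, s(a, b) = s(c i, c (i + 1))) ∨
      (a ∉ Set.range c ∧ b = par a) ∨ (b ∉ Set.range c ∧ a = par b) := by
    intro a b hab
    obtain ⟨v, hv⟩ := kbij.2 ⟨s(a, b), hab⟩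
    by_cases hvc : v ∈ Set.range c
    · obtain ⟨i, rfl⟩ := hvc
      rw [k1] at hv
      exact Or.inl ⟨i, (congrArg Subtype.val hv).symm⟩
    · rw [k2 v hvc] at hv
      have := congrArg Subtype.val hv
      simp only [Sym2.eq_iff] at this
      rcases this with ⟨h, h'⟩ | ⟨h, h'⟩
      · subst h; exact Or.inr (Or.inl ⟨hvc, h'.symm⟩)
      · subst h; exact Or.inr (Or.inr ⟨hvc, h'.symm⟩)
  have hpu : ∀ v w, v ∉ Set.range c → G.Adj v w → δ w ≤ δ v → w = par v := by
    intro v w hv hvw hle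
    rcases hcls v w hvw with ⟨i, h⟩ | ⟨_, h⟩ | ⟨h, h'⟩
    · simp only [Sym2.eq_iff] at h
      rcases h with ⟨h, _⟩ | ⟨h, _⟩
      · exact (hv ⟨_, h.symm⟩).elim
      · exact (hv ⟨_, h.symm⟩).elim
    · exact h
    · have := hpar2 w h
      rw [← h'] at this
      omega
  let δ' : V → ℕ := fun v => if v ∈ Set.range c then 0 else δ v + 1
  have hfc : ∀ (f : G ≃g G) i, f (c i) ∈ Set.range c := by
    intro f
    obtain ⟨i, hmax⟩ := Finite.exists_max (fun i => δ' (f (c i)))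
    intro j
    have hi : f (c i) ∈ Set.range c := by
      by_contra hi
      have hle : ∀ j, G.Adj (c i) (c j) → f (c j) = par (f (c i)) := by
        intro j hj
        apply hpu _ _ hi (f.map_adj_iff.2 hj)
        by_cases hjc : f (c j) ∈ Set.range c
        · by_contra hlt
          rcases hcls _ _ (f.map_adj_iff.2 hj) with ⟨k, h⟩ | ⟨_, h⟩ | ⟨h, _⟩
          · simp only [Sym2.eq_iff] at h
            rcases h with ⟨h, _⟩ | ⟨h, _⟩
            · exact hi ⟨_, h.symm⟩
            · exact hi ⟨_, h.symm⟩
          · have := hpar2 _ hi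
            rw [← h] at this
            omega
          · exact h hjc
        · have := hmax j
          simp only [δ', if_neg hi, if_neg hjc] at this
          omega
      have a := hle (i + 1) (hadj i)
      have b := hle (i - 1) (by have := hadj (i - 1); rw [sub_add_cancel] at this; exact this.symm)
      have := hc (f.injective (a.trans b.symm))
      apply h2
      linear_combination this
    by_contra hj
    have := hmax j
    simp only [δ', if_pos hi, if_neg hj] at this
    omega
  have hfc' : ∀ (f : G ≃g G) w, w ∉ Set.range c → f w ∉ Set.range c := by
    rintro f w hw ⟨i, hi⟩
    have := hfc f.symm i
    rw [hi] at this
    simp at this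
    exact hw this
  have hδf : ∀ (f : G ≃g G) v, δ (f v) = δ v := by
    intro f v
    apply le_antisymm (hδ2 f (hfc f) v)
    have := hδ2 f.symm (hfc f.symm) (f v)
    simpa using this
  have hCC : ∀ i j, G.Adj (c i) (c j) → j = i + 1 ∨ i = j + 1 := by
    intro i j hij
    rcases hcls _ _ hij with ⟨k, h⟩ | ⟨h, _⟩ | ⟨h, _⟩
    · simp only [Sym2.eq_iff] at h
      rcases h with ⟨h, h'⟩ | ⟨h, h'⟩
      · left; rw [hc h, hc h']
      · right; rw [hc h, hc h']
    · exact (h ⟨_, rfl⟩).elim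
    · exact (h ⟨_, rfl⟩).elim
  let κ : V ≃ G.edgeSet := Equiv.ofBijective k0 kbij
  have hmap : ∀ (f : G ≃g G) a b (h : G.Adj a b), f.mapEdgeSet ⟨s(a, b), h⟩ =
      ⟨s(f a, f b), f.map_adj_iff.2 h⟩ := fun f a b h => rfl
  have hW : ∀ (f : G ≃g G) w, w ∉ Set.range c →
      f w ∉ Set.range c ∧ k0 (f w) = f.mapEdgeSet (k0 w) := by
    intro f w hw
    refine ⟨hfc' f w hw, ?_⟩
    rw [k2 w hw, k2 (f w) (hfc' f w hw), hmap]
    have : f (par w) = par (f w) := by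
      apply hpu _ _ (hfc' f w hw) (f.map_adj_iff.2 (hpar1 w hw))
      rw [hδf, hδf]
      exact (hpar2 w hw).le
    simp only [this]
  have hact : ∀ f : G ≃g G, (∃ r, (∀ x, f (c x) = c (x + r)) ∧
        (∀ x, f.mapEdgeSet (e x) = e (x + r)) ∧ ((∀ x, f x = x) → r = 0)) ∨
      (∃ s, (∀ x, f (c x) = c (s - x)) ∧ (∀ x, f.mapEdgeSet (e x) = e (s + (-1) - x)) ∧
        ¬ ∀ x, f x = x) := by
    intro f
    choose g hg using hfc f
    have ginj : Function.Injective g := by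
      intro i j hij
      apply hc
      apply f.injective
      rw [← hg, ← hg, hij]
    rcases dn_rot n hn g ginj (fun i => hCC _ _ (by
      rw [hg, hg]; exact f.map_adj_iff.2 (hadj i))) with ⟨r, hr⟩ | ⟨s, hs⟩
    · left
      refine ⟨r, fun x => by rw [← hg, hr], fun x => ?_, fun h => ?_⟩
      · simp only [e]
        rw [hmap]
        apply Subtype.ext
        simp only [← hg, hr]
        rw [add_right_comm]
      · have := h (c 0)
        rw [← hg, hr] at this
        simpa using hc this
    · right
      refine ⟨s, fun x => by rw [← hg, hs], fun x => ?_, fun h => ?_⟩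
      · simp only [e]
        rw [hmap]
        apply Subtype.ext
        simp only [← hg, hs]
        have e1 : s - (x + 1) = s + (-1) - x := by ring
        have e2 : s - x = s + (-1) - x + 1 := by ring
        rw [Sym2.eq_swap, e1, ← e2]
      · have a0 := h (c 0)
        have a1 := h (c 1)
        rw [← hg, hs] at a0 a1
        have a0 := hc a0
        have a1 := hc a1
        apply h2
        linear_combination a0 - a1
  constructor
  · refine dn_transfer n hn d (fun f : G ≃g G => fun x => f.mapEdgeSet x) (fun f : G ≃g G => fun x => f x)
      (fun f => ∀ x, f x = x) e c κ.symm ?_ einj ?_ 1 ?_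
    · intro i
      rw [← k1]; exact κ.symm_apply_apply _
    · intro f y hy
      obtain ⟨w, rfl⟩ := κ.surjective y
      have hw : w ∉ Set.range c := by
        rintro ⟨i, rfl⟩
        exact hy ⟨i, (k1 i).symm⟩
      obtain ⟨h1, h2⟩ := hW f w hw
      change k0 (f w) = f.mapEdgeSet (κ w) at h2
      simp only [← h2]
      refine ⟨?_, ?_⟩
      · rintro ⟨i, hi⟩
        rw [← k1] at hi
        exact h1 ⟨i, kinj hi⟩
      · rw [κ.symm_apply_apply]
        exact κ.symm_apply_apply _
    · intro f
      rcases hact f with ⟨r, h1, h2, h3⟩ | ⟨s, h1, h2, h3⟩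
      · exact Or.inl ⟨r, h2, h1, h3⟩
      · refine Or.inr ⟨s + (-1), h2, fun x => ?_, h3⟩
        simp only [h1]
        congr 1
        ring
  · exact dn_transfer n hn d (fun f : G ≃g G => fun x => f x)
      (fun f : G ≃g G => fun x => f.mapEdgeSet x)
      (fun f => ∀ x, f x = x) c e κ k1 hc hW (-1) hact

/-- If `G` is a finite connected unicyclic simple graph (a connected graph whose number of
edges equals its number of vertices), then `D'(G) = D(G)`. -/
theorem distinguishingIndex_eq_distinguishingNumber_of_unicyclic
    {V : Type*} [Fintype V] (G : SimpleGraph V)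
    (hconn : G.Connected) (hedge : G.edgeSet.ncard = Fintype.card V) :
    distinguishingIndex G = distinguishingNumber G := by
  unfold distinguishingIndex distinguishingNumber
  congr 1
  ext d
  exact dn_main G hconn hedge d
end

section
/- For every integer p ≥ 6, the distinguishing index of the complete graph K_p equals 2, i.e., D'(K_p) = 2. -/
open SimpleGraph

/-- Adjacency of the path with one chord. -/
def chordRel (a b : ℕ) : Prop := a + 1 = b ∨ b + 1 = a ∨ (a = 1 ∧ b = 3) ∨ (a = 3 ∧ b = 1)

theorem chordRel_rigid (p : ℕ) (hp : 6 ≤ p) (g : ℕ → ℕ)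
    (hi : ∀ a b, a < p → b < p → g a = g b → a = b)
    (hr : ∀ a b, a < p → b < p → chordRel a b → chordRel (g a) (g b)) :
    ∀ n, n < p → g n = n := by
  unfold chordRel at hr
  have r01 := hr 0 1 (by omega) (by omega) (by omega)
  have r12 := hr 1 2 (by omega) (by omega) (by omega)
  have r23 := hr 2 3 (by omega) (by omega) (by omega)
  have r13 := hr 1 3 (by omega) (by omega) (by omega)
  have r34 := hr 3 4 (by omega) (by omega) (by omega)
  have r45 := hr 4 5 (by omega) (by omega) (by omega)
  have ne : ∀ a b, a < p → b < p → a ≠ b → g a ≠ g b := fun a b ha hb h h' => h (hi a b ha hb h')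
  have i01 := ne 0 1 (by omega) (by omega) (by omega)
  have i02 := ne 0 2 (by omega) (by omega) (by omega)
  have i03 := ne 0 3 (by omega) (by omega) (by omega)
  have i12 := ne 1 2 (by omega) (by omega) (by omega)
  have i13 := ne 1 3 (by omega) (by omega) (by omega)
  have i23 := ne 2 3 (by omega) (by omega) (by omega)
  have i14 := ne 1 4 (by omega) (by omega) (by omega)
  have i24 := ne 2 4 (by omega) (by omega) (by omega)
  have i34 := ne 3 4 (by omega) (by omega) (by omega)
  have i35 := ne 3 5 (by omega) (by omega) (by omega)
  have tri : (g 1 = 1 ∨ g 1 = 2 ∨ g 1 = 3) ∧ (g 2 = 1 ∨ g 2 = 2 ∨ g 2 = 3) ∧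
      (g 3 = 1 ∨ g 3 = 2 ∨ g 3 = 3) := by
    clear r01 r34 r45 i01 i02 i03 i14 i24 i34 i35
    omega
  obtain ⟨t1, t2, t3⟩ := tri
  have base : g 0 = 0 ∧ g 1 = 1 ∧ g 2 = 2 ∧ g 3 = 3 := by
    clear r12 r23 r13
    rcases t1 with t1 | t1 | t1 <;> rcases t2 with t2 | t2 | t2 <;>
      rcases t3 with t3 | t3 | t3 <;>
      omega
  obtain ⟨b0, b1, b2, b3⟩ := base
  intro n
  induction n using Nat.strong_induction_on with
  | _ n ih =>
    intro hn
    by_cases h : n < 4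
    · interval_cases n <;> assumption
    · have e1 := ih (n - 1) (by omega) (by omega)
      have e2 := ih (n - 2) (by omega) (by omega)
      have n2 := ne (n - 2) n (by omega) hn (by omega)
      have n1 := ne 1 n (by omega) hn (by omega)
      have r := hr (n - 1) n (by omega) hn (by omega)
      omega

/-- For every `p ≥ 6`, the distinguishing index of the complete graph `K_p` equals `2`. -/
theorem distinguishingIndex_completeGraph (p : ℕ) (hp : 6 ≤ p) :
    distinguishingIndex (⊤ : SimpleGraph (Fin p)) = 2 := by
  classical
  unfold distinguishingIndex
  have hmem : 2 ∈ {d : ℕ | ∃ ψ : (⊤ : SimpleGraph (Fin p)).edgeSet → Fin d,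
      ∀ f : (⊤ : SimpleGraph (Fin p)) ≃g (⊤ : SimpleGraph (Fin p)),
        (∀ e, ψ (f.mapEdgeSet e) = ψ e) → ∀ x : Fin p, f x = x} := by
    let H : SimpleGraph (Fin p) :=
      { Adj := fun a b => chordRel a b
        symm := ⟨fun a b h => by unfold chordRel at *; omega⟩
        loopless := ⟨fun a h => by unfold chordRel at h; omega⟩ }
    refine ⟨fun e => if e.1 ∈ H.edgeSet then 1 else 0, ?_⟩
    intro f hf
    have key : ∀ a b : Fin p, chordRel a b → chordRel (f a) (f b) := by
      intro a b hab
      have hne : (⊤ : SimpleGraph (Fin p)).Adj a b := by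
        have : H.Adj a b := hab
        simpa using this.ne
      have h := hf ⟨s(a, b), hne⟩
      have h1 : s(a, b) ∈ H.edgeSet := hab
      simp only [h1, if_true] at h
      by_contra hc
      have h2 : (f.mapEdgeSet ⟨s(a, b), hne⟩).1 ∉ H.edgeSet := hc
      rw [if_neg h2] at h
      exact absurd h (by decide)
    have := chordRel_rigid p hp (fun n => if h : n < p then (f ⟨n, h⟩ : ℕ) else n)
      (by
        intro a b ha hb h
        simp only [ha, hb, dif_pos] at h
        have := f.injective (Fin.ext h)
        simpa using this)
      (by
        intro a b ha hb h
        simp only [ha, hb, dif_pos]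
        exact key ⟨a, ha⟩ ⟨b, hb⟩ h)
    intro x
    have hx := this x x.2
    simp only [x.2, dif_pos] at hx
    exact Fin.ext hx
  apply le_antisymm (Nat.sInf_le hmem)
  refine le_csInf ⟨2, hmem⟩ ?_
  rintro d ⟨ψ, hψ⟩
  by_contra hd
  have hsub : Subsingleton (Fin d) := Fin.subsingleton_iff_le_one.2 (by omega)
  have h := hψ (SimpleGraph.Iso.completeGraph (Equiv.swap ⟨0, by omega⟩ ⟨1, by omega⟩))
    (fun e => Subsingleton.elim _ _) ⟨0, by omega⟩
  have h' : Equiv.swap (⟨0, by omega⟩ : Fin p) ⟨1, by omega⟩ ⟨0, by omega⟩ = ⟨0, by omega⟩ := h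
  rw [Equiv.swap_apply_left] at h'
  simp at h'
end

section
/- Let T be a finite tree on at least 3 vertices. Then D(T) ≤ D'(T) ≤ D(T) + 1; moreover D'(T) = D(T) + 1 holds only if T is a bicentric tree whose central edge e = vw is such that the two components T_v and T_w of T − e (rooted at v and w respectively) are isomorphic as rooted trees. -/
open SimpleGraph

/-- The eccentricity of a vertex `v` in a finite graph `G`: the maximum distance from `v`
to any vertex. -/
noncomputable def eccentricity {V : Type*} [Fintype V] (G : SimpleGraph V) (v : V) : ℕ :=
  Finset.univ.sup fun u => G.dist v u

/-- The center of a finite graph `G`: the set of vertices of minimum eccentricity. -/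
noncomputable def graphCenter {V : Type*} [Fintype V] (G : SimpleGraph V) : Set V :=
  {v | ∀ u : V, eccentricity G v ≤ eccentricity G u}

section Helpers

variable {V : Type*}

theorem aux_dist_le (G : SimpleGraph V) (hG : G.Connected) (f : G ≃g G) (u v : V) :
    G.dist (f u) (f v) ≤ G.dist u v := by
  obtain ⟨p, hp⟩ := hG.exists_walk_length_eq_dist u v
  have := SimpleGraph.dist_le (p.map f.toHom)
  rw [SimpleGraph.Walk.length_map, hp] at this
  exact this

theorem aux_dist (G : SimpleGraph V) (hG : G.Connected) (f : G ≃g G) (u v : V) :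
    G.dist (f u) (f v) = G.dist u v := by
  apply le_antisymm (aux_dist_le G hG f u v)
  have := aux_dist_le G hG f.symm (f u) (f v)
  simpa using this

theorem aux_ecc [Fintype V] (G : SimpleGraph V) (hG : G.Connected) (f : G ≃g G) (v : V) :
    eccentricity G (f v) = eccentricity G v := by
  have key : ∀ (f : G ≃g G) (v : V), eccentricity G (f v) ≤ eccentricity G v := by
    intro f v
    unfold eccentricity
    apply Finset.sup_le
    intro u _
    have h : G.dist (f v) u = G.dist v (f.symm u) := by
      rw [← aux_dist G hG f v (f.symm u)]; simp
    rw [h]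
    exact Finset.le_sup (f := fun u => G.dist v u) (Finset.mem_univ _)
  apply le_antisymm (key f v)
  simpa using key f.symm (f v)

theorem aux_center_map [Fintype V] (G : SimpleGraph V) (hG : G.Connected) (f : G ≃g G) (v : V)
    (hv : v ∈ graphCenter G) : f v ∈ graphCenter G := by
  intro u
  rw [aux_ecc G hG]
  exact hv u

theorem aux_parent_unique (T : SimpleGraph V) (hT : T.IsTree) (r x y z : V)
    (hy : T.Adj y x) (hz : T.Adj z x) (dy : T.dist r y + 1 = T.dist r x)
    (dz : T.dist r z + 1 = T.dist r x) : y = z := by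
  obtain ⟨p, hp⟩ := hT.connected.exists_walk_length_eq_dist r y
  obtain ⟨q, hq⟩ := hT.connected.exists_walk_length_eq_dist r z
  have h1 : (p.concat hy).IsPath := by
    apply SimpleGraph.Walk.isPath_of_length_eq_dist
    rw [SimpleGraph.Walk.length_concat]; omega
  have h2 : (q.concat hz).IsPath := by
    apply SimpleGraph.Walk.isPath_of_length_eq_dist
    rw [SimpleGraph.Walk.length_concat]; omega
  have h3 := (hT.existsUnique_path r x).unique h1 h2
  have h4 := congrArg SimpleGraph.Walk.penultimate h3
  simpa using h4

theorem aux_parent_exists (T : SimpleGraph V) (hT : T.IsTree) (r x : V) (hx : x ≠ r) :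
    ∃ y, T.Adj y x ∧ T.dist r y + 1 = T.dist r x := by
  obtain ⟨p, hp⟩ := hT.connected.exists_walk_length_eq_dist r x
  have hn : ¬ p.Nil := fun h => hx h.eq.symm
  have ha := p.adj_penultimate hn
  refine ⟨_, ha, ?_⟩
  have h1 := SimpleGraph.dist_le p.dropLast
  have h2 : p.dropLast.length + 1 = p.length := by
    simp [SimpleGraph.Walk.dropLast]
    have := SimpleGraph.Walk.not_nil_iff_lt_length.1 hn
    omega
  rcases hT.dist_eq_dist_add_one_of_adj r ha with h | h <;> omega

theorem aux_root (T : SimpleGraph V) (hT : T.IsTree) (r : V) :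
    ∃ E : {x // x ≠ r} ≃ T.edgeSet,
      (∀ f : T ≃g T, f r = r → ∀ (x : V) (hx : x ≠ r) (hx' : f x ≠ r),
        f.mapEdgeSet (E ⟨x, hx⟩) = E ⟨f x, hx'⟩) ∧
      (∀ x (hx : x ≠ r), T.Adj r x → (E ⟨x, hx⟩ : Sym2 V) = s(r, x)) := by
  choose p hp hd using fun x : {x // x ≠ r} => aux_parent_exists T hT r x.1 x.2
  let e : {x // x ≠ r} → T.edgeSet := fun x => ⟨s(p x, x.1), hp x⟩
  have hinj : Function.Injective e := by
    rintro x y hxy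
    have h : s(p x, x.1) = s(p y, y.1) := congrArg Subtype.val hxy
    rw [Sym2.eq_iff] at h
    rcases h with ⟨_, h⟩ | ⟨h1, h2⟩
    · exact Subtype.ext h
    · have a := hd x
      have b := hd y
      rw [h1] at a
      rw [← h2] at b
      omega
  have huniq : ∀ (a b : V) (hb : b ≠ r), T.Adj a b → T.dist r a + 1 = T.dist r b →
      p ⟨b, hb⟩ = a := fun a b hb hab h =>
    aux_parent_unique T hT r b _ _ (hp ⟨b, hb⟩) hab (hd ⟨b, hb⟩) h
  have hner : ∀ a b : V, T.dist r a + 1 = T.dist r b → b ≠ r := by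
    rintro a b h rfl
    simp at h
  have hsurj : Function.Surjective e := by
    rintro ⟨s, hs⟩
    induction s using Sym2.ind with
    | _ a b =>
    have hab : T.Adj a b := hs
    rcases hT.dist_eq_dist_add_one_of_adj r hab with h | h
    · refine ⟨⟨a, hner b a h.symm⟩, Subtype.ext ?_⟩
      change s(p ⟨a, _⟩, a) = s(a, b)
      rw [huniq b a _ hab.symm h.symm, Sym2.eq_swap]
    · refine ⟨⟨b, hner a b h.symm⟩, Subtype.ext ?_⟩
      change s(p ⟨b, _⟩, b) = s(a, b)
      rw [huniq a b _ hab h.symm]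
  refine ⟨Equiv.ofBijective e ⟨hinj, hsurj⟩, ?_, ?_⟩
  · intro f hf x hx hx'
    apply Subtype.ext
    change s(f (p ⟨x, hx⟩), f x) = s(p ⟨f x, hx'⟩, f x)
    rw [huniq (f (p ⟨x, hx⟩)) (f x) hx' (f.map_adj_iff.2 (hp ⟨x, hx⟩))]
    have h := hd ⟨x, hx⟩
    rw [← aux_dist T hT.connected f r, ← aux_dist T hT.connected f r, hf] at h
    exact h
  · intro x hx hr
    change s(p ⟨x, hx⟩, x) = s(r, x)
    rw [huniq r x hx hr]
    simp [SimpleGraph.dist_eq_one_iff_adj.2 hr]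

theorem aux_center_adj [Fintype V] (T : SimpleGraph V) (hT : T.IsTree) (u v : V)
    (hu : u ∈ graphCenter T) (hv : v ∈ graphCenter T) (huv : u ≠ v) : T.Adj u v := by
  classical
  by_contra hna
  obtain ⟨p, hp, -⟩ := hT.existsUnique_path u v
  have hn : ¬ p.Nil := fun h => huv h.eq
  have hux := p.adj_snd hn
  have hxs : p.snd ∈ p.support := p.getVert_mem_support 1
  generalize p.snd = x at hux hxs
  have hxu : 0 < T.dist u x := hT.connected.pos_dist_of_ne hux.ne
  have hxv : 0 < T.dist v x := hT.connected.pos_dist_of_ne (by rintro rfl; exact hna hux)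
  have key : ∀ y, T.dist x y < eccentricity T u ∨ T.dist x y < eccentricity T v := by
    intro y
    obtain ⟨p1, h1⟩ := hT.connected.exists_walk_length_eq_dist u y
    obtain ⟨p2, h2⟩ := hT.connected.exists_walk_length_eq_dist v y
    have e : p = (p1.append p2.reverse).bypass :=
      (hT.existsUnique_path u v).unique hp (SimpleGraph.Walk.bypass_isPath _)
    have hx : x ∈ (p1.append p2.reverse).support :=
      SimpleGraph.Walk.support_bypass_subset_support _ (e ▸ hxs)
    have gen : ∀ (a : V) (q : T.Walk a y), q.length = T.dist a y → x ∈ q.support →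
        0 < T.dist a x → T.dist x y < eccentricity T a := by
      intro a q hq hxq h0
      have l := congrArg SimpleGraph.Walk.length (q.take_spec hxq)
      rw [SimpleGraph.Walk.length_append] at l
      have l1 := SimpleGraph.dist_le (q.takeUntil x hxq)
      have l2 := SimpleGraph.dist_le (q.dropUntil x hxq)
      have l3 : T.dist a y ≤ eccentricity T a :=
        Finset.le_sup (f := fun u => T.dist a u) (Finset.mem_univ y)
      omega
    rw [SimpleGraph.Walk.mem_support_append_iff] at hx
    rcases hx with hx | hx
    · exact Or.inl (gen u p1 h1 hx hxu)
    · rw [SimpleGraph.Walk.support_reverse, List.mem_reverse] at hx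
      exact Or.inr (gen v p2 h2 hx hxv)
  have e1 : eccentricity T u = eccentricity T v := le_antisymm (hu v) (hv u)
  have hpos : 0 < eccentricity T u := by
    rcases key u with h | h <;> omega
  have : eccentricity T x < eccentricity T u := by
    unfold eccentricity at *
    rw [Finset.sup_lt_iff (by simpa using hpos)]
    intro y _
    rcases key y with h | h
    · exact h
    · rw [e1]; exact h
  exact absurd (hu x) (not_le.2 this)

theorem aux_cases [Fintype V] (T : SimpleGraph V) (hT : T.IsTree) :
    (∃ r, ∀ f : T ≃g T, f r = r) ∨
    (∃ v w : V, v ≠ w ∧ T.Adj v w ∧ graphCenter T = {v, w} ∧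
      ∃ g : T ≃g T, g v = w ∧ g w = v) := by
  classical
  have : Nonempty V := hT.connected.nonempty
  obtain ⟨v, hv⟩ : ∃ v, v ∈ graphCenter T := by
    obtain ⟨v, -, hv⟩ := Finset.exists_min_image Finset.univ (eccentricity T)
      Finset.univ_nonempty
    exact ⟨v, fun u => hv u (Finset.mem_univ u)⟩
  by_cases h : ∀ f : T ≃g T, f v = v
  · exact Or.inl ⟨v, h⟩
  · right
    push Not at h
    obtain ⟨g, hg⟩ := h
    have hw := aux_center_map T hT.connected g v hv
    have hvw := aux_center_adj T hT v (g v) hv hw hg.symm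
    have hc : graphCenter T = {v, g v} := by
      ext x
      constructor
      · intro hx
        by_contra hne
        simp only [Set.mem_insert_iff, Set.mem_singleton_iff, not_or] at hne
        have a1 := aux_center_adj T hT x v hx hv hne.1
        have a2 := aux_center_adj T hT x (g v) hx hw hne.2
        apply hT.dist_ne_of_adj x hvw
        rw [SimpleGraph.dist_eq_one_iff_adj.2 a1, SimpleGraph.dist_eq_one_iff_adj.2 a2]
      · rintro (rfl | rfl)
        · exact hv
        · exact hw
    refine ⟨v, g v, hg.symm, hvw, hc, g, rfl, ?_⟩
    have h2 := aux_center_map T hT.connected g _ hw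
    rw [hc] at h2
    rcases h2 with h2 | h2
    · exact h2
    · exact absurd (g.injective h2) hg

theorem aux_iso (T : SimpleGraph V) (v w : V) (g : T ≃g T) (h1 : g v = w) (h2 : g w = v) :
    ∃ φ : (T.deleteEdges {s(v, w)}).induce
                {u | (T.deleteEdges {s(v, w)}).Reachable v u} ≃g
              (T.deleteEdges {s(v, w)}).induce
                {u | (T.deleteEdges {s(v, w)}).Reachable w u},
          φ ⟨v, Reachable.refl v⟩ = ⟨w, Reachable.refl w⟩ := by
  let g' : T.deleteEdges {s(v, w)} ≃g T.deleteEdges {s(v, w)} :=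
    { toEquiv := g.toEquiv
      map_rel_iff' := by
        intro a b
        have h : s(g a, g b) = s(v, w) ↔ s(a, b) = s(v, w) := by
          have : s(v, w) = Sym2.map g s(v, w) := by
            simp [h1, h2, Sym2.eq_swap]
          conv_lhs => rw [this]
          rw [← Sym2.map_mk]
          exact (Sym2.map.injective g.injective).eq_iff
        have h' : T.Adj (g a) (g b) ↔ T.Adj a b := g.map_adj_iff
        change (T.deleteEdges {s(v, w)}).Adj (g a) (g b) ↔ _
        simp only [SimpleGraph.deleteEdges_adj, Set.mem_singleton_iff, h, h'] }
  have hg' : ∀ x, g' x = g x := fun _ => rfl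
  have hr : ∀ u, (T.deleteEdges {s(v, w)}).Reachable v u ↔
      (T.deleteEdges {s(v, w)}).Reachable w (g' u) := by
    intro u
    have := SimpleGraph.Iso.reachable_iff (φ := g') (u := v) (v := u)
    rw [← this, hg' v, h1]
  refine ⟨{ toEquiv := g'.toEquiv.subtypeEquiv hr, map_rel_iff' := ?_ }, ?_⟩
  · intro a b
    exact g'.map_rel_iff'
  · exact Subtype.ext h1

theorem aux_nbr [Fintype V] (T : SimpleGraph V) (hT : T.IsTree) (hcard : 3 ≤ Fintype.card V)
    (v w : V) (g : T ≃g T) (h1 : g v = w) (h2 : g w = v) :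
    ∃ x, x ≠ w ∧ T.Adj v x := by
  classical
  by_contra hno
  push Not at hno
  have hv : ∀ x, T.Adj v x → x = w := fun x hx => by
    by_contra h; exact hno x h hx
  have hw : ∀ x, T.Adj w x → x = v := fun x hx => by
    have : T.Adj (g w) (g x) := g.map_adj_iff.2 hx
    rw [h2] at this
    exact g.injective ((hv _ this).trans h1.symm)
  have hall : ∀ (a b : V) (p : T.Walk a b), a = v ∨ a = w → b = v ∨ b = w := by
    intro a b p
    induction p with
    | nil => exact id
    | cons h p ih =>
      rintro (rfl | rfl)
      · exact ih (Or.inr (hv _ h))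
      · exact ih (Or.inl (hw _ h))
  have hsub : (Finset.univ : Finset V) ⊆ {v, w} := by
    intro b _
    obtain ⟨p⟩ := hT.connected.preconnected v b
    simpa using hall v b p (Or.inl rfl)
  have := Finset.card_le_card hsub
  have h3 := Finset.card_le_two (a := v) (b := w)
  rw [Finset.card_univ] at this
  omega

def VGood (T : SimpleGraph V) (d : ℕ) : Prop := ∃ φ : V → Fin d,
    ∀ f : T ≃g T, (∀ x : V, φ (f x) = φ x) → ∀ x : V, f x = x

def EGood (T : SimpleGraph V) (d : ℕ) : Prop := ∃ ψ : T.edgeSet → Fin d,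
    ∀ f : T ≃g T, (∀ e : T.edgeSet, ψ (f.mapEdgeSet e) = ψ e) → ∀ x : V, f x = x

/-- a vertex labelling extending an edge labelling, at a root -/
theorem aux_E_to_V (T : SimpleGraph V) (hT : T.IsTree) (r : V) {d : ℕ} (ψ : T.edgeSet → Fin d)
    (hψ : ∀ f : T ≃g T, (∀ e : T.edgeSet, ψ (f.mapEdgeSet e) = ψ e) → ∀ x : V, f x = x)
    (c : Fin d) :
    ∃ φ : V → Fin d, φ r = c ∧ (∀ w (h : T.Adj r w), φ w = ψ ⟨s(r, w), h⟩) ∧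
      ∀ f : T ≃g T, f r = r → (∀ x : V, φ (f x) = φ x) → ∀ x : V, f x = x := by
  classical
  obtain ⟨E, hE, hE2⟩ := aux_root T hT r
  refine ⟨fun x => if hx : x = r then c else ψ (E ⟨x, hx⟩), by simp, ?_, ?_⟩
  · intro w h
    have hw : w ≠ r := h.ne'
    simp only [hw, dite_false]
    congr 1
    exact Subtype.ext (hE2 w hw h)
  · intro f hf h
    apply hψ
    intro e
    obtain ⟨⟨x, hx⟩, rfl⟩ := E.surjective e
    have hx' : f x ≠ r := fun h => hx (f.injective (h.trans hf.symm))
    have := h x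
    simp only [hx, hx', dite_false] at this
    rw [hE f hf x hx hx', this]

theorem aux_V_to_E (T : SimpleGraph V) (hT : T.IsTree) (r : V) {d : ℕ} (φ : V → Fin d)
    (hφ : ∀ f : T ≃g T, (∀ x : V, φ (f x) = φ x) → ∀ x : V, f x = x) :
    ∃ ψ : T.edgeSet → Fin d, ∀ f : T ≃g T, f r = r →
      (∀ e : T.edgeSet, f.mapEdgeSet e ≠ e → ψ (f.mapEdgeSet e) = ψ e) → ∀ x : V, f x = x := by
  obtain ⟨E, hE, -⟩ := aux_root T hT r
  refine ⟨fun e => φ (E.symm e).1, fun f hf h => hφ f fun x => ?_⟩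
  by_cases hx : x = r
  · rw [hx, hf]
  have hx' : f x ≠ r := fun h => hx (f.injective (h.trans hf.symm))
  by_cases he : f.mapEdgeSet (E ⟨x, hx⟩) = E ⟨x, hx⟩
  · rw [hE f hf x hx hx'] at he
    have := congrArg Subtype.val (E.injective he)
    exact congrArg φ this
  · have := h _ he
    rw [hE f hf x hx hx'] at this
    simpa using this

theorem aux_VGood_of_EGood [Fintype V] (T : SimpleGraph V) (hT : T.IsTree)
    (hcard : 3 ≤ Fintype.card V) (d : ℕ) (h : EGood T d) : VGood T d := by
  classical
  obtain ⟨ψ, hψ⟩ := h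
  have : Nontrivial V := Fintype.one_lt_card_iff_nontrivial.1 (by omega)
  rcases aux_cases T hT with ⟨r, hr⟩ | ⟨v, w, hne, hadj, hc, g, hg1, hg2⟩
  · obtain ⟨y, hy⟩ := exists_ne r
    obtain ⟨E, -⟩ := aux_root T hT r
    obtain ⟨φ, -, -, hφ⟩ := aux_E_to_V T hT r ψ hψ (ψ (E ⟨y, hy⟩))
    exact ⟨φ, fun f hf => hφ f (hr f) hf⟩
  · have hd : ∃ c : Fin d, c ≠ ψ ⟨s(v, w), hadj⟩ := by
      by_contra hcon
      push Not at hcon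
      have := hψ g (fun e => by rw [hcon (ψ _), hcon (ψ e)]) v
      exact hne (this.symm.trans hg1)
    obtain ⟨c, hcne⟩ := hd
    obtain ⟨φ, h1, h2, hφ⟩ := aux_E_to_V T hT v ψ hψ c
    refine ⟨φ, fun f hf => hφ f ?_ hf⟩
    have hm := aux_center_map T hT.connected f v (by rw [hc]; simp)
    rw [hc] at hm
    rcases hm with hm | hm
    · exact hm
    · exfalso
      have hm : f v = w := hm
      have := hf v
      rw [hm, h2 w hadj, h1] at this
      exact hcne this.symm

theorem aux_EGood_of_fixed (T : SimpleGraph V) (hT : T.IsTree) (r : V)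
    (hr : ∀ f : T ≃g T, f r = r) (d : ℕ) (h : VGood T d) : EGood T d := by
  obtain ⟨φ, hφ⟩ := h
  obtain ⟨ψ, hψ⟩ := aux_V_to_E T hT r φ hφ
  exact ⟨ψ, fun f hf => hψ f (hr f) fun e _ => hf e⟩

theorem aux_EGood_succ [Fintype V] (T : SimpleGraph V) (hT : T.IsTree)
    (hcard : 3 ≤ Fintype.card V) (v w : V) (hne : v ≠ w) (hc : graphCenter T = {v, w})
    (g : T ≃g T) (hg1 : g v = w) (hg2 : g w = v)
    (d : ℕ) (h : VGood T d) : EGood T (d + 1) := by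
  classical
  obtain ⟨φ, hφ⟩ := h
  obtain ⟨ψ, hψ⟩ := aux_V_to_E T hT v φ hφ
  obtain ⟨x, hxw, hvx⟩ := aux_nbr T hT hcard v w g hg1 hg2
  let e0 : T.edgeSet := ⟨s(v, x), hvx⟩
  refine ⟨fun e => if e = e0 then Fin.last d else (ψ e).castSucc, fun f hf => ?_⟩
  have he : f.mapEdgeSet e0 = e0 := by
    by_contra hcon
    have := hf e0
    simp only [hcon, if_true, if_false] at this
    exact (Fin.castSucc_lt_last _).ne this
  have hfv : f v = v := by
    have hm := aux_center_map T hT.connected f v (by rw [hc]; simp)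
    rw [hc] at hm
    rcases hm with hm | hm
    · exact hm
    · exfalso
      have hm : f v = w := hm
      have h3 : s(f v, f x) = s(v, x) := congrArg Subtype.val he
      rw [hm, Sym2.eq_iff] at h3
      rcases h3 with h3 | h3
      · exact hne h3.1.symm
      · exact hxw h3.1.symm
  apply hψ f hfv
  intro e hee
  have h1 : e ≠ e0 := by rintro rfl; exact hee he
  have h2 : f.mapEdgeSet e ≠ e0 := fun h => h1 (f.mapEdgeSet.injective (h.trans he.symm))
  have := hf e
  simp only [h1, h2, if_false] at this
  exact Fin.castSucc_injective _ this

end Helpers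

/-- Let `T` be a finite tree on at least 3 vertices. Then `D(T) ≤ D'(T) ≤ D(T) + 1`;
moreover `D'(T) = D(T) + 1` holds only if `T` is bicentric with central edge `e = vw` such
that the two components `T_v` and `T_w` of `T − e` are isomorphic as trees rooted at `v`
and at `w`, i.e. there is a graph isomorphism between them sending `v` to `w`. -/
theorem distinguishing_tree {V : Type*} [Fintype V] (T : SimpleGraph V)
    (hT : T.IsTree) (hcard : 3 ≤ Fintype.card V) :
    distinguishingNumber T ≤ distinguishingIndex T ∧
    distinguishingIndex T ≤ distinguishingNumber T + 1 ∧
    (distinguishingIndex T = distinguishingNumber T + 1 →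
      ∃ v w : V, v ≠ w ∧ T.Adj v w ∧ graphCenter T = {v, w} ∧
        ∃ φ : (T.deleteEdges {s(v, w)}).induce
                {u | (T.deleteEdges {s(v, w)}).Reachable v u} ≃g
              (T.deleteEdges {s(v, w)}).induce
                {u | (T.deleteEdges {s(v, w)}).Reachable w u},
          φ ⟨v, Reachable.refl v⟩ = ⟨w, Reachable.refl w⟩) := by
  have hVne : VGood T (Fintype.card V) :=
    ⟨Fintype.equivFin V, fun f hf x => (Fintype.equivFin V).injective (hf x)⟩
  have hV : VGood T (distinguishingNumber T) :=
    Nat.sInf_mem (s := {d | VGood T d}) ⟨_, hVne⟩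
  have hDE : ∀ d, EGood T d → distinguishingIndex T ≤ d := fun d h =>
    Nat.sInf_le (s := {d | EGood T d}) h
  have hDV : ∀ d, VGood T d → distinguishingNumber T ≤ d := fun d h =>
    Nat.sInf_le (s := {d | VGood T d}) h
  have hEmem : ∀ d, EGood T d → EGood T (distinguishingIndex T) := fun d h =>
    Nat.sInf_mem (s := {d | EGood T d}) ⟨d, h⟩
  rcases aux_cases T hT with ⟨r, hr⟩ | ⟨v, w, hne, hadj, hc, g, hg1, hg2⟩
  · have hE := aux_EGood_of_fixed T hT r hr _ hV
    have h1 := hDE _ hE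
    refine ⟨hDV _ (aux_VGood_of_EGood T hT hcard _ (hEmem _ hE)), by omega, fun h => ?_⟩
    omega
  · have hE := aux_EGood_succ T hT hcard v w hne hc g hg1 hg2 _ hV
    exact ⟨hDV _ (aux_VGood_of_EGood T hT hcard _ (hEmem _ hE)), hDE _ hE,
      fun _ => ⟨v, w, hne, hadj, hc, aux_iso T v w g hg1 hg2⟩⟩
end
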